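/- Let 0 < α < 2. Then there is no sequence (b_n)_{n≥1} of real numbers satisfying 0 < b_n ≤ α − 1 and b_{n+1} = α·b_n² − 1 for every n ≥ 1. -/

import Mathlib

/-!
The map `x ↦ α x² - 1` moves a point `x ≥ 0` down exactly when `α x² < x + 1`, which for `α > 0`
says that `x` lies below the positive fixed point `(1 + √(1 + 4α)) / (2α)`. By convexity of
`x ↦ α x² - x`, an orbit in `[0, ∞)` starting at such a point `s` descends at every step by at
least `1 - max 0 (α s² - s) > 0`, which cannot go on forever. When `α < 2`, the points of
`(0, α - 1]` are smaller than `1` and hence lie below the fixed point.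
-/

section OrderedGroup

variable {G : Type*} [AddCommGroup G] [LinearOrder G] [IsOrderedAddMonoid G]

theorem add_nsmul_le_of_forall_succ_add_le {u : ℕ → G} {δ : G}
    (hu : ∀ n, u (n + 1) + δ ≤ u n) (n : ℕ) : u n + n • δ ≤ u 0 := by
  have antitone_add : Antitone fun n ↦ u n + n • δ := antitone_nat_of_succ_le fun n ↦
    calc
      u (n + 1) + (n + 1) • δ = u (n + 1) + δ + n • δ := by rw [succ_nsmul', add_assoc]
      _ ≤ u n + n • δ := add_le_add_left (hu n) _
  simpa only [zero_nsmul, add_zero] using antitone_add n.zero_le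

theorem exists_neg_of_forall_succ_add_le [Archimedean G] {u : ℕ → G} {δ : G} (hδ : 0 < δ)
    (hu : ∀ n, u (n + 1) + δ ≤ u n) : ∃ n, u n < 0 := by
  obtain ⟨n, hn⟩ := exists_lt_nsmul hδ (u 0)
  exact ⟨n, neg_of_add_lt_left ((add_nsmul_le_of_forall_succ_add_le hu n).trans_lt hn)⟩

end OrderedGroup

section OrderedRing

variable {R : Type*} [CommRing R] [LinearOrder R] [IsStrictOrderedRing R] {α s t : R}

theorem mul_sq_sub_self_le_max (ht : 0 ≤ t) (hts : t ≤ s) :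
    α * t ^ 2 - t ≤ max 0 (α * s ^ 2 - s) := by
  have factor (x : R) : α * x ^ 2 - x = x * (α * x - 1) := by ring
  rw [factor, factor]
  rcases le_total (α * t) 1 with h | h
  · exact le_max_of_le_left (mul_nonpos_of_nonneg_of_nonpos ht (sub_nonpos.2 h))
  · have hα : 0 < α := pos_of_mul_pos_left (zero_lt_one.trans_le h) ht
    have slope_le : α * t - 1 ≤ α * s - 1 := by gcongr
    exact le_max_of_le_right
      (mul_le_mul hts slope_le (sub_nonneg.2 h) (ht.trans hts))

theorem mul_sq_lt_add_one_of_lt_one (hα : α ≤ 2) (ht : 0 ≤ t) (ht1 : t < 1) :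
    α * t ^ 2 < t + 1 := by
  calc
    α * t ^ 2 ≤ 2 * t ^ 2 := by gcongr
    _ ≤ 2 * t := by gcongr; exact pow_le_of_le_one ht ht1.le two_ne_zero
    _ < t + 1 := by linarith

theorem exists_pos_forall_mul_sq_sub_one_add_le (hs : α * s ^ 2 < s + 1) :
    ∃ δ > 0, ∀ t, 0 ≤ t → t ≤ s → α * t ^ 2 - 1 + δ ≤ t := by
  have max_lt_one : max 0 (α * s ^ 2 - s) < 1 := max_lt one_pos (sub_left_lt_of_lt_add hs)
  refine ⟨1 - max 0 (α * s ^ 2 - s), sub_pos.2 max_lt_one, fun t ht hts ↦ ?_⟩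
  linarith [mul_sq_sub_self_le_max (α := α) ht hts]

theorem no_bounded_recursion_sequence_general [Archimedean R] (α : R) :
    ¬ ∃ b : ℕ → R, α * b 0 ^ 2 < b 0 + 1 ∧
        ∀ n, 0 ≤ b n ∧ b (n + 1) ≤ α * b n ^ 2 - 1 := by
  rintro ⟨b, hinit, hb⟩
  obtain ⟨δ, hδ, descent⟩ := exists_pos_forall_mul_sq_sub_one_add_le hinit
  have succ_add_le {n : ℕ} (hn : b n ≤ b 0) : b (n + 1) + δ ≤ b n :=
    (add_le_add_left (hb n).2 δ).trans (descent (b n) (hb n).1 hn)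
  have le_initial : ∀ n, b n ≤ b 0 := by
    intro n
    induction n with
    | zero => exact le_rfl
    | succ n ih => exact (le_add_of_nonneg_right hδ.le).trans ((succ_add_le ih).trans ih)
  obtain ⟨n, hn⟩ := exists_neg_of_forall_succ_add_le hδ fun n ↦ succ_add_le (le_initial n)
  exact hn.not_ge (hb n).1

end OrderedRing

/-- For `0 < α < 2`, there is no sequence `(b_n)_{n≥1}` of reals with
`0 < b_n ≤ α − 1` and `b_{n+1} = α b_n² − 1` for all `n ≥ 1`. -/
theorem no_bounded_recursion_sequence (α : ℝ) (h0 : 0 < α) (h2 : α < 2) :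
    ¬ ∃ b : ℕ → ℝ, ∀ n : ℕ, 1 ≤ n →
        (0 < b n ∧ b n ≤ α - 1) ∧ b (n + 1) = α * (b n) ^ 2 - 1 := by
  rintro ⟨b, hb⟩
  obtain ⟨⟨hpos, hle⟩, -⟩ := hb 1 le_rfl
  exact no_bounded_recursion_sequence_general α ⟨fun n ↦ b (n + 1),
    mul_sq_lt_add_one_of_lt_one h2.le hpos.le (by linarith), fun n ↦
      ⟨(hb (n + 1) n.succ_pos).1.1.le, (hb (n + 1) n.succ_pos).2.le⟩⟩
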